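/- Let f : [-π,π] → ℝ be continuous, even, strictly positive, and satisfy f(-π) = f(π). Let T_n(f) be the n×n Toeplitz matrix with entries γ_f(l-m), where γ_f(j) = ∫_{-π}^{π} f(λ) e^{ijλ} dλ. Then lim_{n→∞} (1/n) log det T_n(f) = (1/(2π)) ∫_{-π}^{π} log(2π f(λ)) dλ. -/

import Mathlib

open MeasureTheory Real Complex Filter BigOperators

noncomputable def szA (f : ℝ → ℝ) (j : ℤ) : ℝ := ∫ x in (-π)..π, f x * Real.cos (j * x)

lemma sz_cc {f : ℝ → ℝ} (hc : ContinuousOn f (Set.Icc (-π) π)) :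
    IntervalIntegrable f volume (-π) π := by
  apply ContinuousOn.intervalIntegrable
  rwa [Set.uIcc_of_le (by linarith [Real.pi_pos])]

lemma sz_re {f : ℝ → ℝ} (hc : ContinuousOn f (Set.Icc (-π) π)) (j : ℤ) :
    (∫ x in (-π)..π, ((f x : ℝ) : ℂ) * Complex.exp (Complex.I * (j : ℂ) * (x : ℂ))).re
      = szA f j := by
  have hi : IntervalIntegrable (fun x : ℝ => ((f x : ℝ) : ℂ) *
      Complex.exp (Complex.I * (j : ℂ) * (x : ℂ))) volume (-π) π := by
    apply ContinuousOn.intervalIntegrable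
    rw [Set.uIcc_of_le (by linarith [Real.pi_pos])]
    apply ContinuousOn.mul
    · exact Complex.continuous_ofReal.comp_continuousOn hc
    · fun_prop
  have := Complex.reCLM.intervalIntegral_comp_comm hi
  simp only [Complex.reCLM_apply] at this
  rw [← this, szA]
  congr 1; ext x
  rw [Complex.re_ofReal_mul]
  congr 1
  have : Complex.I * (j : ℂ) * (x : ℂ) = ((j * x : ℝ) : ℂ) * Complex.I := by push_cast; ring
  rw [this, Complex.exp_ofReal_mul_I_re]

lemma sz_odd {f : ℝ → ℝ} (he : ∀ x, f (-x) = f x) (j : ℤ) :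
    ∫ x in (-π)..π, f x * Real.sin (j * x) = 0 := by
  have h := intervalIntegral.integral_comp_neg (a := -π) (b := π)
    (fun x => f x * Real.sin (j * x))
  simp only [neg_neg, he, mul_neg, Real.sin_neg, intervalIntegral.integral_neg] at h
  linarith

lemma sz_negpi : -π < π := by linarith [Real.pi_pos]

lemma sz_coeff {f : ℝ → ℝ} (hc : ContinuousOn f (Set.Icc (-π) π))
    (he : ∀ x, f (-x) = f x) (j : ℤ) :
    fourierCoeffOn sz_negpi (fun x => (f x : ℂ)) j = (((2 * π)⁻¹ * szA f j : ℝ) : ℂ) := by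
  rw [fourierCoeffOn_eq_integral]
  have h1 : ∀ x : ℝ, (fourier (-j) (x : AddCircle (π - -π)) : ℂ) • (f x : ℂ)
      = ((f x * Real.cos (j * x) : ℝ) : ℂ) - Complex.I * ((f x * Real.sin (j * x) : ℝ) : ℂ) := by
    intro x
    rw [fourier_coe_apply]
    have : 2 * (π : ℂ) * Complex.I * ((-j : ℤ) : ℂ) * (x : ℂ) / ((π - -π : ℝ) : ℂ)
        = ((-(j * x) : ℝ) : ℂ) * Complex.I := by
      have hp : (π : ℂ) ≠ 0 := by exact_mod_cast Real.pi_ne_zero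
      have : ((π - -π : ℝ) : ℂ) = 2 * π := by push_cast; ring
      rw [this]; field_simp; push_cast; ring
    rw [this, Complex.exp_mul_I, ← Complex.ofReal_cos, ← Complex.ofReal_sin, Real.cos_neg,
      Real.sin_neg]
    push_cast; simp only [smul_eq_mul]; ring
  simp_rw [h1]
  have i1 : IntervalIntegrable (fun x => f x * Real.cos (j * x)) volume (-π) π :=
    sz_cc (hc.mul (by fun_prop))
  have i2 : IntervalIntegrable (fun x => f x * Real.sin (j * x)) volume (-π) π :=
    sz_cc (hc.mul (by fun_prop))
  rw [intervalIntegral.integral_sub, intervalIntegral.integral_const_mul,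
    intervalIntegral.integral_ofReal, intervalIntegral.integral_ofReal, sz_odd he]
  · rw [szA]
    have : (π - -π) = 2 * π := by ring
    rw [this]; simp
  · exact ⟨i1.1.ofReal, i1.2.ofReal⟩
  · exact IntervalIntegrable.const_mul (⟨i2.1.ofReal, i2.2.ofReal⟩) _

lemma sz_pars {f : ℝ → ℝ} (hc : ContinuousOn f (Set.Icc (-π) π))
    (he : ∀ x, f (-x) = f x) :
    HasSum (fun j : ℤ => szA f j ^ 2) (2 * π * ∫ x in (-π)..π, f x ^ 2) := by
  have hL : MemLp (fun x => (f x : ℂ)) 2 (volume.restrict (Set.Ioc (-π) π)) := by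
    have h1 : ContinuousOn (fun x => (f x : ℂ)) (Set.Icc (-π) π) :=
      Complex.continuous_ofReal.comp_continuousOn hc
    obtain ⟨C, hC⟩ := isCompact_Icc.exists_bound_of_continuousOn h1
    refine MemLp.of_bound ((h1.mono Set.Ioc_subset_Icc_self).aestronglyMeasurable
      measurableSet_Ioc) C ?_
    filter_upwards [ae_restrict_mem measurableSet_Ioc] with x hx
    exact hC x (Set.Ioc_subset_Icc_self hx)
  have h := hasSum_sq_fourierCoeffOn sz_negpi hL
  simp_rw [sz_coeff hc he] at h
  have h2 := h.mul_left ((2 * π) ^ 2)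
  have hp := Real.pi_ne_zero
  refine (congrArg₂ (fun a b => HasSum (a : ℤ → ℝ) b) ?_ ?_).mpr h2
  · ext j
    rw [Complex.norm_real, Real.norm_eq_abs, sq_abs]; field_simp
  · simp only [Complex.norm_real, Real.norm_eq_abs, sq_abs, smul_eq_mul]
    have : (π - -π) = 2 * π := by ring
    rw [this]; field_simp

lemma sz_pars2 {f h : ℝ → ℝ} (hc : ContinuousOn f (Set.Icc (-π) π))
    (he : ∀ x, f (-x) = f x) (hc' : ContinuousOn h (Set.Icc (-π) π))
    (he' : ∀ x, h (-x) = h x) :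
    HasSum (fun j : ℤ => szA f j * szA h j) (2 * π * ∫ x in (-π)..π, f x * h x) := by
  have h1 := sz_pars (f := fun x => f x + h x) (hc.add hc') (by simp [he, he'])
  have h2 := sz_pars (f := fun x => f x - h x) (hc.sub hc') (by simp [he, he'])
  have h3 := (h1.sub h2).mul_left (1/4)
  have j1 : ∀ j : ℤ, IntervalIntegrable (fun x => f x * Real.cos (j * x)) volume (-π) π :=
    fun j => sz_cc (hc.mul (by fun_prop))
  have j2 : ∀ j : ℤ, IntervalIntegrable (fun x => h x * Real.cos (j * x)) volume (-π) π :=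
    fun j => sz_cc (hc'.mul (by fun_prop))
  refine (congrArg₂ (fun a b => HasSum (a : ℤ → ℝ) b) ?_ ?_).mpr h3
  · ext j
    have e1 : szA (fun x => f x + h x) j = szA f j + szA h j := by
      simp only [szA, add_mul]
      rw [intervalIntegral.integral_add (j1 j) (j2 j)]
    have e2 : szA (fun x => f x - h x) j = szA f j - szA h j := by
      simp only [szA, sub_mul]
      rw [intervalIntegral.integral_sub (j1 j) (j2 j)]
    rw [e1, e2]; ring
  · have i1 : IntervalIntegrable (fun x => (f x + h x) ^ 2) volume (-π) π :=
      sz_cc ((hc.add hc').pow 2)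
    have i2 : IntervalIntegrable (fun x => (f x - h x) ^ 2) volume (-π) π :=
      sz_cc ((hc.sub hc').pow 2)
    rw [← mul_sub, ← intervalIntegral.integral_sub i1 i2]
    have : ∀ x, (f x + h x) ^ 2 - (f x - h x) ^ 2 = 4 * (f x * h x) := fun x => by ring
    simp_rw [this]
    rw [intervalIntegral.integral_const_mul]; ring

lemma sz_ces {c : ℤ → ℝ} {s : ℝ} (hs : HasSum c s) :
    Tendsto (fun n : ℕ => (n : ℝ)⁻¹ * ∑ l : Fin n, ∑ m : Fin n, c ((l : ℤ) - (m : ℤ)))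
      atTop (nhds s) := by
  have h1 := hs.nat_add_neg.tendsto_sum_nat
  have h2 := ((h1.comp (tendsto_add_atTop_nat 1)).sub_const (c 0)).cesaro
  simp only [add_sub_cancel_right] at h2
  convert h2 using 1
  ext n
  congr 1
  simp_rw [Finset.sum_range, ← Finset.sum_range (fun l : ℕ => ∑ m : Fin n, c ((l:ℤ) - (m : ℕ)))]
  have key : ∀ n : ℕ, ∑ l ∈ Finset.range n, ∑ m ∈ Finset.range n, c ((l : ℤ) - (m : ℤ)) =
      ∑ k ∈ Finset.range n, ((∑ i ∈ Finset.range (k+1), (c i + c (-(i:ℤ)))) - c 0) := by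
    intro n
    induction n with
    | zero => simp
    | succ n ih =>
      rw [Finset.sum_range_succ (fun k => (∑ i ∈ Finset.range (k+1), (c i + c (-(i:ℤ)))) - c 0),
        ← ih, Finset.sum_range_succ]
      simp_rw [Finset.sum_range_succ _ n, Finset.sum_add_distrib]
      have r1 : ∑ x ∈ Finset.range n, c ((x:ℤ) - n) + c (-(0:ℕ)) 
          = ∑ x ∈ Finset.range n, c (-(x:ℤ)) + c (-(n:ℤ)) := by
        rw [← Finset.sum_range_succ (fun x : ℕ => c (-(x:ℤ))),
          ← Finset.sum_range_reflect (fun x : ℕ => c (-(x:ℤ))),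
          Finset.sum_range_succ]
        congr 1
        · apply Finset.sum_congr rfl
          intro x hx
          have := Finset.mem_range.1 hx
          congr 1; omega
        · simp
      have r2 : ∑ x ∈ Finset.range n, c ((n:ℤ) - x) + c (0:ℕ) 
          = ∑ x ∈ Finset.range n, c ((x:ℤ)) + c (n:ℤ) := by
        rw [← Finset.sum_range_succ (fun x : ℕ => c (x:ℤ)),
          ← Finset.sum_range_reflect (fun x : ℕ => c (x:ℤ)),
          Finset.sum_range_succ]
        congr 1
        · apply Finset.sum_congr rfl
          intro x hx
          have := Finset.mem_range.1 hx
          congr 1; omega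
        · simp
      simp only [Nat.cast_zero, neg_zero, sub_self] at r1 r2 ⊢
      linarith
  have := key n
  simp_rw [Finset.sum_range] at this
  simp_rw [Function.comp, Finset.sum_range]
  exact this

lemma sz_spec {n : ℕ} (T : Matrix (Fin n) (Fin n) ℝ) (hT : T.IsHermitian) :
    ∃ (U : Matrix (Fin n) (Fin n) ℝ) (lam : Fin n → ℝ),
      (∀ l m, T l m = ∑ i, lam i * (U l i * U m i)) ∧
      (∀ l m, ∑ i, U l i * U m i = if l = m then 1 else 0) ∧
      (∀ i j, ∑ l, U l i * U l j = if i = j then 1 else 0) ∧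
      T.det = ∏ i, lam i := by
  refine ⟨(hT.eigenvectorUnitary : Matrix (Fin n) (Fin n) ℝ), hT.eigenvalues, ?_, ?_, ?_, ?_⟩
  · intro l m
    have h := congrFun (congrFun hT.spectral_theorem l) m
    rw [Unitary.conjStarAlgAut_apply] at h
    rw [h, Matrix.mul_apply]
    apply Finset.sum_congr rfl
    intro i _
    rw [Matrix.mul_diagonal]
    simp [Matrix.star_apply]
    ring
  · intro l m
    have h := congrFun (congrFun (Matrix.mem_unitaryGroup_iff.1 hT.eigenvectorUnitary.2) l) m
    rw [Matrix.mul_apply, Matrix.one_apply] at h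
    simpa [Matrix.star_apply] using h
  · intro l m
    have h := congrFun (congrFun (Matrix.mem_unitaryGroup_iff'.1 hT.eigenvectorUnitary.2) l) m
    rw [Matrix.mul_apply, Matrix.one_apply] at h
    simpa [Matrix.star_apply] using h
  · simpa using hT.det_eq_prod_eigenvalues

lemma szA_one (j : ℤ) : szA (fun _ => 1) j = if j = 0 then 2 * π else 0 := by
  simp only [szA, one_mul]
  split_ifs with h
  · subst h; simp; ring
  · have hj : (j : ℝ) ≠ 0 := by exact_mod_cast h
    rw [intervalIntegral.integral_comp_mul_left (fun x => Real.cos x) hj, integral_cos]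
    simp [Real.sin_int_mul_pi]

noncomputable def szp {n : ℕ} (u : Fin n → ℝ) (x : ℝ) : ℝ :=
  ∑ l, ∑ m, u l * u m * Real.cos (((l : ℤ) - (m : ℤ) : ℤ) * x)

lemma szp_nonneg {n : ℕ} (u : Fin n → ℝ) (x : ℝ) : 0 ≤ szp u x := by
  have : szp u x = (∑ l, u l * Real.cos (l * x)) ^ 2 + (∑ l, u l * Real.sin (l * x)) ^ 2 := by
    rw [sq, sq, Finset.sum_mul_sum, Finset.sum_mul_sum, ← Finset.sum_add_distrib, szp]
    refine Finset.sum_congr rfl fun l _ => ?_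
    rw [← Finset.sum_add_distrib]
    refine Finset.sum_congr rfl fun m _ => ?_
    push_cast
    rw [sub_mul, Real.cos_sub]; ring
  rw [this]; positivity

lemma szp_cont {n : ℕ} (u : Fin n → ℝ) : Continuous (szp u) := by
  unfold szp; fun_prop

lemma szp_int {n : ℕ} (u : Fin n → ℝ) {w : ℝ → ℝ} (hw : ContinuousOn w (Set.Icc (-π) π)) :
    ∫ x in (-π)..π, w x * szp u x = ∑ l, ∑ m, u l * u m * szA w ((l : ℤ) - (m : ℤ)) := by
  simp only [szp, Finset.mul_sum]
  rw [intervalIntegral.integral_finsetSum]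
  · refine Finset.sum_congr rfl fun l _ => ?_
    rw [intervalIntegral.integral_finsetSum]
    · refine Finset.sum_congr rfl fun m _ => ?_
      rw [szA, ← intervalIntegral.integral_const_mul]
      congr 1; ext x; ring
    · intro m _
      exact sz_cc (hw.mul (by fun_prop))
  · intro l _
    refine sz_cc (continuousOn_finsetSum _ fun m _ => hw.mul (by fun_prop))

lemma sz_tan {a b : ℝ} (ha : 0 < a) (hb : 0 < b) : Real.log a ≤ Real.log b + a / b - 1 := by
  have := Real.log_le_sub_one_of_pos (div_pos ha hb)
  rw [Real.log_div ha.ne' hb.ne'] at this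
  linarith

lemma sz_mono {u v : ℝ → ℝ} (hu : ContinuousOn u (Set.Icc (-π) π))
    (hv : ContinuousOn v (Set.Icc (-π) π)) (h : ∀ x ∈ Set.Icc (-π) π, u x ≤ v x) :
    ∫ x in (-π)..π, u x ≤ ∫ x in (-π)..π, v x :=
  intervalIntegral.integral_mono_on sz_negpi.le (sz_cc hu) (sz_cc hv) h

lemma sz_bounds {f : ℝ → ℝ} (hc : ContinuousOn f (Set.Icc (-π) π))
    (hPos : ∀ x ∈ Set.Icc (-π) π, 0 < f x) (n : ℕ)
    (T : Matrix (Fin n) (Fin n) ℝ) (hT : ∀ l m, T l m = szA f ((l : ℤ) - (m : ℤ))) :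
    n * (∫ x in (-π)..π, Real.log (2 * π * f x)) ≤ 2 * π * Real.log T.det ∧
    2 * π * Real.log T.det ≤ n * (∫ x in (-π)..π, Real.log (2 * π * f x)) +
      (∑ l : Fin n, ∑ m : Fin n, szA f ((l : ℤ) - (m : ℤ)) *
        szA (fun x => (2 * π * f x)⁻¹) ((l : ℤ) - (m : ℤ))) - 2 * π * n := by
  have hp := Real.pi_pos
  have hH : T.IsHermitian := by
    ext l m
    simp only [Matrix.conjTranspose_apply, star_trivial, hT, szA]
    congr 1; ext x
    rw [← Real.cos_neg]
    congr 2
    push_cast; ring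
  obtain ⟨U, lam, h1, h2, h3, h4⟩ := sz_spec T hH
  set p : Fin n → ℝ → ℝ := fun i => szp (fun l => U l i) with hpdef
  have hg : ∀ x ∈ Set.Icc (-π) π, 0 < 2 * π * f x := fun x hx => by
    have := hPos x hx; positivity
  have hgc : ContinuousOn (fun x => 2 * π * f x) (Set.Icc (-π) π) := continuousOn_const.mul hc
  have hlc : ContinuousOn (fun x => Real.log (2 * π * f x)) (Set.Icc (-π) π) :=
    hgc.log fun x hx => (hg x hx).ne'
  have hic : ContinuousOn (fun x => (2 * π * f x)⁻¹) (Set.Icc (-π) π) :=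
    hgc.inv₀ fun x hx => (hg x hx).ne'
  have hpc : ∀ i, ContinuousOn (p i) (Set.Icc (-π) π) := fun i => (szp_cont _).continuousOn
  have hp0 : ∀ i x, 0 ≤ p i x := fun i x => szp_nonneg _ x
  -- integral of p
  have Ip : ∀ i, ∫ x in (-π)..π, p i x = 2 * π := by
    intro i
    have := szp_int (fun l => U l i) (w := fun _ => 1) continuousOn_const
    simp only [one_mul, szA_one, sub_eq_zero, Nat.cast_inj, Fin.val_inj, mul_ite, mul_zero,
      Finset.sum_ite_eq, Finset.mem_univ, if_true] at this
    rw [this, ← Finset.sum_mul, h3]; simp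
  have If : ∀ i, ∫ x in (-π)..π, f x * p i x = lam i := by
    intro i
    rw [szp_int _ hc]
    simp_rw [← hT, h1]
    have e : ∀ l m, U l i * U m i * ∑ k, lam k * (U l k * U m k)
        = ∑ k, lam k * ((U l k * U l i) * (U m k * U m i)) := by
      intro l m; rw [Finset.mul_sum]; refine Finset.sum_congr rfl fun k _ => by ring
    simp_rw [e]
    have e2 : ∀ l, ∑ m, ∑ k, lam k * ((U l k * U l i) * (U m k * U m i))
        = lam i * (U l i * U l i) := by
      intro l
      rw [Finset.sum_comm]
      simp_rw [← Finset.mul_sum, h3]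
      simp
    simp_rw [e2]
    rw [← Finset.mul_sum, h3]; simp
  have Sp : ∀ x, ∑ i, p i x = n := by
    intro x
    simp only [hpdef, szp]
    rw [Finset.sum_comm]
    have e : ∀ l : Fin n, ∑ i, ∑ m : Fin n, U l i * U m i * Real.cos (((l : ℤ) - (m : ℤ) : ℤ) * x)
        = 1 := by
      intro l
      rw [Finset.sum_comm]
      simp_rw [← Finset.sum_mul, h2]
      simp
    simp_rw [e]; simp
  have lampos : ∀ i, 0 < lam i := by
    intro i
    obtain ⟨x0, hx0, hmin⟩ := isCompact_Icc.exists_isMinOn (Set.nonempty_Icc.2 sz_negpi.le) hc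
    have : ∫ x in (-π)..π, f x0 * p i x ≤ ∫ x in (-π)..π, f x * p i x :=
      sz_mono (continuousOn_const.mul (hpc i)) (hc.mul (hpc i)) fun x hx =>
        mul_le_mul_of_nonneg_right (hmin hx) (hp0 i x)
    rw [intervalIntegral.integral_const_mul, Ip, If] at this
    have := hPos x0 hx0
    have : 0 < f x0 * (2 * π) := by positivity
    linarith
  have hdet : Real.log T.det = ∑ i, Real.log (lam i) := by
    rw [h4, Real.log_prod fun i _ => (lampos i).ne']
  have hlog : n * (∫ x in (-π)..π, Real.log (2 * π * f x))
      = ∑ i, ∫ x in (-π)..π, Real.log (2 * π * f x) * p i x := by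
    rw [← intervalIntegral.integral_finsetSum, ← intervalIntegral.integral_const_mul]
    · congr 1; ext x; rw [← Finset.mul_sum, Sp, mul_comm]
    · intro i _; exact sz_cc (hlc.mul (hpc i))
  rw [hlog, hdet, Finset.mul_sum]
  constructor
  · refine Finset.sum_le_sum fun i _ => ?_
    have : ∫ x in (-π)..π, Real.log (2 * π * f x) * p i x ≤
        ∫ x in (-π)..π, ((Real.log (lam i) - 1) * p i x + (2 * π / lam i) * (f x * p i x)) := by
      refine sz_mono (hlc.mul (hpc i)) ((continuousOn_const.mul (hpc i)).add
        (continuousOn_const.mul (hc.mul (hpc i)))) fun x hx => ?_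
      have := mul_le_mul_of_nonneg_right (sz_tan (hg x hx) (lampos i)) (hp0 i x)
      refine this.trans (le_of_eq ?_)
      ring
    have i1 : IntervalIntegrable (fun x => (Real.log (lam i) - 1) * p i x) volume (-π) π :=
      sz_cc (continuousOn_const.mul (hpc i))
    have i2 : IntervalIntegrable (fun x => (2 * π / lam i) * (f x * p i x)) volume (-π) π :=
      sz_cc (continuousOn_const.mul (hc.mul (hpc i)))
    rw [intervalIntegral.integral_add i1 i2, intervalIntegral.integral_const_mul,
      intervalIntegral.integral_const_mul, Ip, If, div_mul_cancel₀ _ (lampos i).ne'] at this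
    linarith
  · have b : ∀ i, 2 * π * Real.log (lam i) ≤ (∫ x in (-π)..π, Real.log (2 * π * f x) * p i x)
        + lam i * (∫ x in (-π)..π, (2 * π * f x)⁻¹ * p i x) - 2 * π := by
      intro i
      have : ∫ x in (-π)..π, Real.log (lam i) * p i x ≤
          ∫ x in (-π)..π, ((Real.log (2 * π * f x) * p i x + lam i * ((2 * π * f x)⁻¹ * p i x))
            - p i x) := by
        refine sz_mono (continuousOn_const.mul (hpc i)) (((hlc.mul (hpc i)).add
          (continuousOn_const.mul (hic.mul (hpc i)))).sub (hpc i)) fun x hx => ?_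
        have := mul_le_mul_of_nonneg_right (sz_tan (lampos i) (hg x hx)) (hp0 i x)
        refine this.trans (le_of_eq ?_)
        rw [div_eq_mul_inv]
        ring
      have i1 : IntervalIntegrable (fun x => Real.log (2 * π * f x) * p i x) volume (-π) π :=
        sz_cc (hlc.mul (hpc i))
      have i2 : IntervalIntegrable (fun x => lam i * ((2 * π * f x)⁻¹ * p i x)) volume (-π) π :=
        sz_cc (continuousOn_const.mul (hic.mul (hpc i)))
      rw [intervalIntegral.integral_sub (i1.add i2) (sz_cc (hpc i)),
        intervalIntegral.integral_add i1 i2,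
        intervalIntegral.integral_const_mul, intervalIntegral.integral_const_mul, Ip] at this
      linarith
    have q : ∑ i, lam i * (∫ x in (-π)..π, (2 * π * f x)⁻¹ * p i x) =
        ∑ l : Fin n, ∑ m : Fin n, szA f ((l : ℤ) - (m : ℤ)) *
        szA (fun x => (2 * π * f x)⁻¹) ((l : ℤ) - (m : ℤ)) := by
      simp_rw [hpdef, szp_int _ hic, ← hT, h1, Finset.mul_sum, Finset.sum_mul]
      rw [Finset.sum_comm]
      refine Finset.sum_congr rfl fun l _ => ?_
      rw [Finset.sum_comm]
      refine Finset.sum_congr rfl fun m _ => ?_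
      refine Finset.sum_congr rfl fun i _ => by ring
    refine (Finset.sum_le_sum fun i _ => b i).trans (le_of_eq ?_)
    rw [Finset.sum_sub_distrib, Finset.sum_add_distrib, q]
    simp; ring

/-- The first Szegő limit theorem (Whittle's approximation of the log-determinant):
for `f` continuous, even, strictly positive on `[-π,π]` with `f(-π) = f(π)`,
`(1/n) log det T_n(f) → (1/(2π)) ∫_{-π}^{π} log(2π f(λ)) dλ`, where `T_n(f)` is the
`n×n` Toeplitz matrix with entries `γ_f(l-m)`. -/
theorem szego_limit_theorem (f : ℝ → ℝ)
    (hc : ContinuousOn f (Set.Icc (-Real.pi) Real.pi))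
    (hEven : ∀ lam : ℝ, f (-lam) = f lam)
    (hPos : ∀ lam ∈ Set.Icc (-Real.pi) Real.pi, 0 < f lam)
    (hPer : f (-Real.pi) = f Real.pi) :
    Tendsto (fun n : ℕ =>
        (1 / (n : ℝ)) * Real.log
          (Matrix.of fun l m : Fin n =>
            (∫ lam in (-Real.pi)..Real.pi,
              ((f lam : ℝ) : ℂ) *
                Complex.exp (Complex.I * (((l : ℤ) - (m : ℤ) : ℤ) : ℂ) * (lam : ℂ))).re).det)
      atTop
      (nhds ((1 / (2 * Real.pi)) *
        ∫ lam in (-Real.pi)..Real.pi, Real.log (2 * Real.pi * f lam))) := by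
  have hp := Real.pi_pos
  have hg : ∀ x ∈ Set.Icc (-π) π, 2 * π * f x ≠ 0 := fun x hx => by
    have := hPos x hx; positivity
  have hic : ContinuousOn (fun x => (2 * π * f x)⁻¹) (Set.Icc (-π) π) :=
    (continuousOn_const.mul hc).inv₀ hg
  have hs := sz_pars2 hc hEven hic (by simp [hEven])
  have hI : 2 * π * ∫ x in (-π)..π, f x * (2 * π * f x)⁻¹ = 2 * π := by
    have : ∫ x in (-π)..π, f x * (2 * π * f x)⁻¹ = ∫ x in (-π)..π, (2 * π)⁻¹ := by
      apply intervalIntegral.integral_congr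
      intro x hx
      rw [Set.uIcc_of_le sz_negpi.le] at hx
      have := (hPos x hx).ne'
      simp only
      field_simp
    rw [this, intervalIntegral.integral_const, smul_eq_mul]; field_simp; ring
  rw [hI] at hs
  have hT := sz_ces hs
  have hT2 := (((hT.sub_const (2 * π)).const_mul (1 / (2 * π))).const_add
    ((1 / (2 * π)) * ∫ x in (-π)..π, Real.log (2 * π * f x)))
  rw [sub_self, mul_zero, add_zero] at hT2
  refine tendsto_of_tendsto_of_tendsto_of_le_of_le' tendsto_const_nhds hT2 ?_ ?_
  · filter_upwards [eventually_gt_atTop 0] with n hn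
    have hn' : (0 : ℝ) < n := by exact_mod_cast hn
    obtain ⟨b1, -⟩ := sz_bounds hc hPos n _ (fun l m => sz_re hc ((l : ℤ) - (m : ℤ)))
    rw [one_div_mul_eq_div, one_div_mul_eq_div, div_le_div_iff₀ (by positivity) hn']
    refine le_trans (le_of_eq (mul_comm _ _)) (b1.trans (le_of_eq (mul_comm _ _)))
  · filter_upwards [eventually_gt_atTop 0] with n hn
    have hn' : (0 : ℝ) < n := by exact_mod_cast hn
    obtain ⟨-, b2⟩ := sz_bounds hc hPos n _ (fun l m => sz_re hc ((l : ℤ) - (m : ℤ)))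
    rw [one_div_mul_eq_div, div_le_iff₀ hn']
    rw [← le_div_iff₀' (by positivity)] at b2
    refine b2.trans (le_of_eq ?_)
    field_simp
    ring
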